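/- Let a, b be coprime integers with 2 ≤ a < b, let k ≥ 2, and let S = ⟨a_1, …, a_k⟩ where a_i = a^{k−i} b^{i−1} for i = 1, …, k (generators forming a geometric sequence). Then Δ_∞(S) = {1, 2, …, b}. -/

import Mathlib

open Finset

/-- `Zfac a x`: the set of factorizations of `x` with respect to the generators `a`. -/
def Zfac {k : ℕ} (a : Fin k → ℕ) (x : ℕ) : Set (Fin k → ℕ) :=
  {z | ∑ j, z j * a j = x}

/-- The `∞`-length of a factorization: the maximum coordinate. -/
def linf {k : ℕ} (z : Fin k → ℕ) : ℕ :=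
  Finset.univ.sup z

/-- The `0`-length of a factorization: the size of its support. -/
def lzero {k : ℕ} (z : Fin k → ℕ) : ℕ :=
  (Finset.univ.filter fun i => z i ≠ 0).card

/-- `𝓛∞(x)`: the set of `∞`-lengths of factorizations of `x`. -/
def LinfSet {k : ℕ} (a : Fin k → ℕ) (x : ℕ) : Set ℕ :=
  linf '' Zfac a x

/-- `𝓛∞(x, i)`: `∞`-lengths of factorizations whose maximum coordinate is attained at `i`. -/
def LinfSetI {k : ℕ} (a : Fin k → ℕ) (x : ℕ) (i : Fin k) : Set ℕ :=
  linf '' {z | z ∈ Zfac a x ∧ z i = linf z}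

/-- `𝓛₀(x)`: the set of `0`-lengths of factorizations of `x`. -/
def LzeroSet {k : ℕ} (a : Fin k → ℕ) (x : ℕ) : Set ℕ :=
  lzero '' Zfac a x

/-- The set of differences between consecutive elements of a set `T ⊆ ℕ`. -/
def deltaSet (T : Set ℕ) : Set ℕ :=
  {d | ∃ u ∈ T, ∃ v ∈ T, u < v ∧ v - u = d ∧ ∀ t ∈ T, ¬(u < t ∧ t < v)}

/-- `Δ∞(x)`. -/
def DeltaInf {k : ℕ} (a : Fin k → ℕ) (x : ℕ) : Set ℕ := deltaSet (LinfSet a x)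

/-- `Δ∞(S) = ⋃ x ∈ S, Δ∞(x)` (for `x ∉ S` the contribution is empty). -/
def DeltaInfS {k : ℕ} (a : Fin k → ℕ) : Set ℕ := ⋃ x : ℕ, DeltaInf a x

/-- `Δ₀(x)`. -/
def DeltaZero {k : ℕ} (a : Fin k → ℕ) (x : ℕ) : Set ℕ := deltaSet (LzeroSet a x)

/-- `Δ₀(S) = ⋃ x ∈ S, Δ₀(x)` (for `x ∉ S` the contribution is empty). -/
def DeltaZeroS {k : ℕ} (a : Fin k → ℕ) : Set ℕ := ⋃ x : ℕ, DeltaZero a x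

/-- `a` is a system of minimal generators: no generator is a `ℕ`-combination of the others. -/
def MinimalGens {k : ℕ} (a : Fin k → ℕ) : Prop :=
  ∀ i : Fin k, ¬ ∃ z : Fin k → ℕ, z i = 0 ∧ ∑ j, z j * a j = a i

/-- The geometric generators. -/
def geoGen (a b k : ℕ) : Fin k → ℕ := fun i => a ^ (k - 1 - (i : ℕ)) * b ^ (i : ℕ)

lemma geo_sum_succ (a b k : ℕ) (z : Fin (k + 1) → ℕ) :
    ∑ j, z j * geoGen a b (k + 1) j
      = a * (∑ j : Fin k, z j.castSucc * geoGen a b k j) + z (Fin.last k) * b ^ k := by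
  rw [Fin.sum_univ_castSucc, Finset.mul_sum]
  congr 1
  · refine Finset.sum_congr rfl fun j _ => ?_
    have h : k + 1 - 1 - (j : ℕ) = (k - 1 - (j : ℕ)) + 1 := by have := j.2; omega
    simp only [geoGen, Fin.val_castSucc, h, pow_succ]
    ring
  · simp [geoGen]

/-- Reduced factorizations are unique. -/
lemma geo_uniq (a b : ℕ) (ha : 2 ≤ a) (hcop : Nat.Coprime a b) :
    ∀ (k : ℕ) (z z' : Fin k → ℕ), (∀ i : Fin k, 0 < (i : ℕ) → z i < a) → (∀ i : Fin k, 0 < (i : ℕ) → z' i < a) →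
      ∑ j, z j * geoGen a b k j = ∑ j, z' j * geoGen a b k j → z = z' := by
  intro k
  induction k with
  | zero => intro z z' _ _ _; funext i; exact i.elim0
  | succ k ih =>
    intro z z' hz hz' h
    rw [geo_sum_succ, geo_sum_succ] at h
    have hlast : z (Fin.last k) = z' (Fin.last k) := by
      rcases Nat.eq_zero_or_pos k with rfl | hk
      · simpa using h
      · have h1 : z (Fin.last k) * b ^ k ≡ z' (Fin.last k) * b ^ k [MOD a] := by
          have := congrArg (· % a) h
          simpa [Nat.ModEq, Nat.mul_add_mod] using this
        have h2 := Nat.ModEq.cancel_right_of_coprime (hcop.pow_right k) h1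
        exact Nat.ModEq.eq_of_lt_of_lt h2 (hz _ (by simpa using hk)) (hz' _ (by simpa using hk))
    rw [hlast] at h
    have h3 := Nat.eq_of_mul_eq_mul_left (by omega : 0 < a) (Nat.add_right_cancel h)
    have h4 := ih (fun j => z j.castSucc) (fun j => z' j.castSucc)
      (fun i hi => hz _ (by simpa using hi)) (fun i hi => hz' _ (by simpa using hi)) h3
    funext i
    refine Fin.lastCases hlast (fun j => ?_) i
    exact congrFun h4 j

lemma sum_add_single {k : ℕ} (g w : Fin k → ℕ) (i : Fin k) (c : ℕ) :
    ∑ j, (w + Pi.single i c : Fin k → ℕ) j * g j = ∑ j, w j * g j + c * g i := by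
  simp [add_mul, Finset.sum_add_distrib, Pi.single_apply, ite_mul]

lemma geo_trade (a b k : ℕ) (i j : Fin k) (hij : (j : ℕ) = i + 1) :
    a * geoGen a b k j = b * geoGen a b k i := by
  have h : k - 1 - (i : ℕ) = (k - 1 - (j : ℕ)) + 1 := by have := j.2; omega
  simp only [geoGen, h, hij, pow_succ]
  ring

/-- A predicate on the factorizations of `x` invariant under basic trades is constant. -/
lemma geo_conn (a b k x : ℕ) (ha : 2 ≤ a) (hab : a < b) (hcop : Nat.Coprime a b)
    (Q : (Fin k → ℕ) → Prop)
    (hQ : ∀ (w : Fin k → ℕ) (i j : Fin k), (w + Pi.single j a) ∈ Zfac (geoGen a b k) x →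
      (w + Pi.single i b) ∈ Zfac (geoGen a b k) x → (Q (w + Pi.single j a) ↔ Q (w + Pi.single i b)))
    (z z' : Fin k → ℕ) (hz : z ∈ Zfac (geoGen a b k) x) (hz' : z' ∈ Zfac (geoGen a b k) x) :
    Q z ↔ Q z' := by
  have hred : ∀ (n : ℕ) (z : Fin k → ℕ), z ∈ Zfac (geoGen a b k) x → x - ∑ j, z j = n →
      ∃ y ∈ Zfac (geoGen a b k) x, (∀ i : Fin k, 0 < (i : ℕ) → y i < a) ∧ (Q z ↔ Q y) := by
    intro n
    induction n using Nat.strong_induction_on with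
    | _ n ih =>
      intro z hz hn
      by_cases hr : ∀ i : Fin k, 0 < (i : ℕ) → z i < a
      · exact ⟨z, hz, hr, Iff.rfl⟩
      · push Not at hr
        obtain ⟨j, hj, hja⟩ := hr
        let i : Fin k := ⟨(j : ℕ) - 1, by have := j.2; omega⟩
        have hij : (j : ℕ) = i + 1 := by simp only [i]; omega
        let w : Fin k → ℕ := z - Pi.single j a
        have hw : z = w + Pi.single j a := by
          funext l
          simp only [w, Pi.add_apply, Pi.sub_apply, Pi.single_apply]
          split_ifs with h
          · subst h; omega
          · omega
        have hzn : (w + Pi.single i b) ∈ Zfac (geoGen a b k) x := by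
          rw [hw] at hz
          simp only [Zfac, Set.mem_ofPred_eq, sum_add_single] at hz ⊢
          rw [← hz, geo_trade a b k i j hij]
        have hle : ∀ y ∈ Zfac (geoGen a b k) x, ∑ l, y l ≤ x := by
          intro y hy
          rw [← (show _ = x from hy)]
          refine Finset.sum_le_sum fun l _ => Nat.le_mul_of_pos_right _ ?_
          exact Nat.mul_pos (Nat.pow_pos (by omega)) (Nat.pow_pos (by omega))
        have hs1 : ∑ l, z l = ∑ l, w l + a := by
          have := sum_add_single (fun _ => 1) w j a
          rw [← hw] at this
          simpa using this
        have hs2 : ∑ l, (w + Pi.single i b : Fin k → ℕ) l = ∑ l, w l + b := by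
          have := sum_add_single (fun _ => 1) w i b
          simpa only [mul_one] using this
        have hb := hle _ hzn
        obtain ⟨y, hy, hyr, hyQ⟩ := ih (x - ∑ l, (w + Pi.single i b : Fin k → ℕ) l) (by omega)
          (w + Pi.single i b) hzn rfl
        refine ⟨y, hy, hyr, ?_⟩
        rw [← hyQ, ← hQ w i j (hw ▸ hz) hzn, ← hw]
  obtain ⟨y, hy, hyr, hyQ⟩ := hred _ z hz rfl
  obtain ⟨y', hy', hyr', hyQ'⟩ := hred _ z' hz' rfl
  have : y = y' := geo_uniq a b ha hcop k y y' hyr hyr' (hy.trans hy'.symm)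
  rw [hyQ, hyQ', this]

lemma le_linf {k : ℕ} (z : Fin k → ℕ) (i : Fin k) : z i ≤ linf z :=
  Finset.le_sup (f := z) (Finset.mem_univ i)

lemma linf_le {k : ℕ} {z : Fin k → ℕ} {c : ℕ} (h : ∀ i, z i ≤ c) : linf z ≤ c :=
  Finset.sup_le fun i _ => h i

lemma linf_add_single_le {k : ℕ} (w : Fin k → ℕ) (i : Fin k) (c : ℕ) :
    linf (w + Pi.single i c) ≤ linf w + c := by
  refine linf_le fun l => ?_
  have := le_linf w l
  simp only [Pi.add_apply, Pi.single_apply]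
  split_ifs <;> omega

lemma le_linf_add_single {k : ℕ} (w : Fin k → ℕ) (i : Fin k) (c : ℕ) :
    linf w ≤ linf (w + Pi.single i c) := by
  refine linf_le fun l => ?_
  have := le_linf (w + Pi.single i c) l
  simp only [Pi.add_apply] at this
  omega

lemma geo_upper (a b k : ℕ) (ha : 2 ≤ a) (hab : a < b) (hcop : Nat.Coprime a b) (x d : ℕ)
    (hd : d ∈ DeltaInf (geoGen a b k) x) : d ≤ b := by
  obtain ⟨u, ⟨z, hz, rfl⟩, v, ⟨z', hz', rfl⟩, huv, rfl, hno⟩ := hd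
  by_contra hlt
  have key := geo_conn a b k x ha hab hcop (fun y => linf y ≤ linf z) (by
    intro w i j h1 h2
    have n1 := hno _ ⟨_, h1, rfl⟩
    have n2 := hno _ ⟨_, h2, rfl⟩
    have e1 := linf_add_single_le w j a
    have e2 := linf_add_single_le w i b
    have e3 := le_linf_add_single w j a
    have e4 := le_linf_add_single w i b
    constructor <;> intro h <;> omega) z z' hz hz'
  have := key.1 le_rfl
  omega

lemma geo_lower (a b m : ℕ) (ha : 2 ≤ a) (hab : a < b) (hcop : Nat.Coprime a b) (d : ℕ)
    (hd1 : 1 ≤ d) (hdb : d ≤ b) :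
    d ∈ DeltaInf (geoGen a b (m + 2)) ((b - 1) * d * (a ^ m * b)) := by
  obtain ⟨e, rfl⟩ : ∃ e, b = a + 1 + e := ⟨b - a - 1, by omega⟩
  set b := a + 1 + e with hb
  have hb1 : b - 1 = a + e := by omega
  rw [hb1]
  have g0 : geoGen a b (m + 2) 0 = a * a ^ m := by
    simp [geoGen, pow_succ, mul_comm]
  have g1 : geoGen a b (m + 2) 1 = a ^ m * b := by
    simp [geoGen]
  have hbpos : 0 < b := by omega
  have hapos : 0 < a := by omega
  have h01 : (0 : Fin (m + 2)) ≠ 1 := by simp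
  refine ⟨(a + e) * d, ⟨Pi.single 1 ((a + e) * d), ?_, ?_⟩, b * d,
    ⟨Pi.single 1 (e * d) + Pi.single 0 (b * d), ?_, ?_⟩, ?_, ?_, ?_⟩
  · have := sum_add_single (geoGen a b (m + 2)) 0 1 ((a + e) * d)
    simp only [zero_add, g1] at this
    simpa [Zfac] using this
  · apply le_antisymm
    · refine linf_le fun l => ?_
      simp only [Pi.single_apply]; split_ifs <;> simp
    · have := le_linf (Pi.single 1 ((a + e) * d) : Fin (m + 2) → ℕ) 1
      simpa using this
  · have h1 := sum_add_single (geoGen a b (m + 2)) 0 1 (e * d)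
    have h2 := sum_add_single (geoGen a b (m + 2)) (Pi.single 1 (e * d)) 0 (b * d)
    simp only [zero_add, g1] at h1
    rw [h1, g0] at h2
    simp only [Zfac, Set.mem_ofPred_eq]
    rw [h2]
    simp
    ring
  · apply le_antisymm
    · refine linf_le fun l => ?_
      have : e * d ≤ b * d := Nat.mul_le_mul_right _ (by omega)
      simp only [Pi.add_apply, Pi.single_apply]
      split_ifs with h h' h'
      · exact absurd (h'.symm.trans h) h01
      · omega
      · omega
      · omega
    · have := le_linf (Pi.single 1 (e * d) + Pi.single 0 (b * d) : Fin (m + 2) → ℕ) 0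
      simpa using this
  · exact Nat.mul_lt_mul_of_pos_right (by omega) (by omega)
  · have : b * d = (a + e) * d + d := by rw [hb]; ring
    omega
  · rintro t ⟨z, hz, rfl⟩ ⟨hlo, hhi⟩
    have hz : ∑ j, z j * geoGen a b (m + 2) j = (a + e) * d * (a ^ m * b) := hz
    obtain ⟨i, -, hi⟩ := Finset.exists_mem_eq_sup (Finset.univ : Finset (Fin (m + 2))) ⟨0, by simp⟩ z
    change linf z = z i at hi
    rw [hi] at hlo hhi
    by_cases hi0 : i = 0
    · subst hi0
      have hdvd : b ∣ z 0 := by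
        have h1 : b ∣ ∑ j, z j * geoGen a b (m + 2) j := by
          rw [hz]; exact Dvd.intro_left ((a + e) * d * a ^ m) (by ring)
        rw [Fin.sum_univ_succ] at h1
        have h2 : b ∣ ∑ j : Fin (m + 1), z j.succ * geoGen a b (m + 2) j.succ := by
          refine Finset.dvd_sum fun j _ => ?_
          simp only [geoGen, Fin.val_succ, pow_succ]
          exact Dvd.intro_left (z j.succ * (a ^ (m + 2 - 1 - ((j : ℕ) + 1)) * b ^ (j : ℕ))) (by ring)
        have h3 := (Nat.dvd_add_left h2).1 h1
        rw [g0, ← pow_succ'] at h3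
        exact (hcop.symm.pow_right (m + 1)).dvd_of_dvd_mul_right h3
      obtain ⟨c, hc⟩ := hdvd
      rw [hc] at hlo hhi
      have hcd : c < d := Nat.lt_of_mul_lt_mul_left hhi
      have : b * (c + 1) ≤ b * d := Nat.mul_le_mul_left _ hcd
      have : b * d = (a + e) * d + d := by rw [hb]; ring
      rw [mul_add] at *
      omega
    · have hip : 0 < (i : ℕ) := Nat.pos_of_ne_zero fun h => hi0 (Fin.ext h)
      have hle : z i * geoGen a b (m + 2) i ≤ (a + e) * d * (a ^ m * b) := by
        rw [← hz]
        exact Finset.single_le_sum (f := fun j => z j * geoGen a b (m + 2) j)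
          (fun _ _ => Nat.zero_le _) (Finset.mem_univ i)
      have hg : a ^ m * b ≤ geoGen a b (m + 2) i := by
        obtain ⟨s, hs⟩ : ∃ s, (i : ℕ) = s + 1 := ⟨i - 1, by omega⟩
        obtain ⟨r, hr⟩ : ∃ r, m = r + s := ⟨m - s, by have := i.2; omega⟩
        have e1 : m + 2 - 1 - (i : ℕ) = r := by omega
        simp only [geoGen]
        rw [e1, hs, hr, pow_add, pow_succ, mul_assoc]
        exact Nat.mul_le_mul_left _ (Nat.mul_le_mul_right _ (Nat.pow_le_pow_left (by omega) s))
      have hpos : 0 < a ^ m * b := Nat.mul_pos (Nat.pow_pos hapos) hbpos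
      have : z i * (a ^ m * b) ≤ (a + e) * d * (a ^ m * b) :=
        (Nat.mul_le_mul_left _ hg).trans hle
      have := Nat.le_of_mul_le_mul_right this hpos
      omega

/-- For `S = ⟨a^{k−1}, a^{k−2}b, …, b^{k−1}⟩` with `2 ≤ a < b` coprime,
`Δ∞(S) = {1, 2, …, b}`. -/
theorem stmt_8 (a b k : ℕ) (ha : 2 ≤ a) (hab : a < b) (hcop : Nat.Coprime a b)
    (hk : 2 ≤ k) :
    DeltaInfS (fun i : Fin k => a ^ (k - 1 - (i : ℕ)) * b ^ (i : ℕ)) = Set.Icc 1 b := by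
  change DeltaInfS (geoGen a b k) = Set.Icc 1 b
  ext d
  simp only [DeltaInfS, Set.mem_iUnion, Set.mem_Icc]
  constructor
  · rintro ⟨x, hx⟩
    refine ⟨?_, geo_upper a b k ha hab hcop x d hx⟩
    obtain ⟨u, -, v, -, huv, rfl, -⟩ := hx
    omega
  · rintro ⟨h1, h2⟩
    obtain ⟨m, rfl⟩ : ∃ m, k = m + 2 := ⟨k - 2, by omega⟩
    exact ⟨_, geo_lower a b m ha hab hcop d h1 h2⟩
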